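/- Let (X, μ) be a finite measure space and for each pair (R, n) ∈ ℕ × ℕ let h_{R,n} : X → [0,1] be a measurable function. Assume that for every x ∈ X, lim_{R→∞} ( limsup_{n→∞} h_{R,n}(x) ) = 0. Then for every δ > 0 there exist a measurable set X_δ ⊆ X with μ(X ∖ X_δ) < δ and a strictly increasing sequence (R_j)_{j∈ℕ} in ℕ such that lim_{j→∞} ( limsup_{n→∞} sup_{x ∈ X_δ} h_{R_j, n}(x) ) = 0. -/

import Mathlib

open MeasureTheory Filter Topology

/-!
Egorov's theorem has a one-sided form, which follows by applying it to `max (f n) g`. Used on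
`f = h R`, `g = limsup (h R)`, once for each of the countably many `R` and with summable exceptional
measures, it bounds `h R n` by its upper limit plus `ε`, uniformly off one small set. Used on
these upper limits and `g = 0`, it makes them uniformly small off another small set. Hence the
full sequence in `R` converges and no subsequence has to be extracted.
-/

section Egorov

open scoped ENNReal

variable {X ι κ : Type*} [MeasurableSpace X] {μ : Measure X} [IsFiniteMeasure μ] [Countable ι]
  [SemilatticeSup κ] [Nonempty κ] [Countable κ] {δ : ℝ≥0∞}

theorem exists_measurableSet_eventually_forall_notMem_lt_add {f : κ → X → ℝ} {g : X → ℝ}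
    (hf : ∀ n, Measurable (f n)) (hg : Measurable g)
    (hfg : ∀ᵐ x ∂μ, ∀ ε > 0, ∀ᶠ n in atTop, f n x < g x + ε) (hδ : 0 < δ) :
    ∃ t, MeasurableSet t ∧ μ t < δ ∧ ∀ ε > 0, ∀ᶠ n in atTop, ∀ x ∉ t, f n x < g x + ε := by
  obtain ⟨η, hη, hηδ⟩ := ENNReal.lt_iff_exists_nnreal_btwn.1 hδ
  have hmax : ∀ᵐ x ∂μ, Tendsto (fun n => max (f n x) (g x)) atTop (𝓝 (g x)) := by
    filter_upwards [hfg] with x hx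
    refine tendsto_order.2 ⟨fun a ha => .of_forall fun n => ha.trans_le (le_max_right _ _),
      fun b hb => ?_⟩
    filter_upwards [hx (b - g x) (sub_pos.2 hb)] with n hn
    exact max_lt (by linarith) hb
  obtain ⟨t, ht, hμt, hunif⟩ := tendstoUniformlyOn_of_ae_tendsto'
    (fun n => ((hf n).max hg).stronglyMeasurable) hg.stronglyMeasurable hmax
    (NNReal.coe_pos.2 (ENNReal.coe_pos.1 hη))
  refine ⟨t, ht, (hμt.trans_eq (ENNReal.ofReal_coe_nnreal)).trans_lt hηδ, fun ε hε => ?_⟩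
  filter_upwards [Metric.tendstoUniformlyOn_iff.1 hunif ε hε] with n hn x hx
  have hdist : |g x - max (f n x) (g x)| < ε := hn x hx
  linarith [(abs_lt.1 hdist).1, le_max_left (f n x) (g x)]

theorem exists_measurableSet_forall_eventually_forall_notMem_lt_add {f : ι → κ → X → ℝ}
    {g : ι → X → ℝ} (hf : ∀ i n, Measurable (f i n)) (hg : ∀ i, Measurable (g i))
    (hfg : ∀ i, ∀ᵐ x ∂μ, ∀ ε > 0, ∀ᶠ n in atTop, f i n x < g i x + ε) (hδ : 0 < δ) :
    ∃ t, MeasurableSet t ∧ μ t < δ ∧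
      ∀ i, ∀ ε > 0, ∀ᶠ n in atTop, ∀ x ∉ t, f i n x < g i x + ε := by
  obtain ⟨η, hη, hsum⟩ := ENNReal.exists_pos_sum_of_countable' hδ.ne' ι
  choose t ht hμt hlt using fun i =>
    exists_measurableSet_eventually_forall_notMem_lt_add (hf i) (hg i) (hfg i) (hη i)
  refine ⟨⋃ i, t i, .iUnion ht, ?_, fun i ε hε => ?_⟩
  · calc μ (⋃ i, t i) ≤ ∑' i, μ (t i) := measure_iUnion_le t
      _ ≤ ∑' i, η i := ENNReal.tsum_le_tsum fun i => (hμt i).le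
      _ < δ := hsum
  · filter_upwards [hlt i ε hε] with n hn x hx
    exact hn x fun hxi => hx (Set.mem_iUnion_of_mem i hxi)

theorem exists_measurableSet_eventually_eventually_forall_lt_add [SemilatticeSup ι] [Nonempty ι]
    {h : ι → κ → X → ℝ} {g : X → ℝ} (hmeas : ∀ i n, Measurable (h i n)) (hg : Measurable g)
    (hbdd : ∀ i, ∀ᵐ x ∂μ, IsBoundedUnder (· ≤ ·) atTop fun n => h i n x)
    (hlim : ∀ᵐ x ∂μ, Tendsto (fun i => limsup (fun n => h i n x) atTop) atTop (𝓝 (g x)))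
    (hδ : 0 < δ) :
    ∃ s, MeasurableSet s ∧ μ sᶜ < δ ∧
      ∀ ε > 0, ∀ᶠ i in atTop, ∀ᶠ n in atTop, ∀ x ∈ s, h i n x < g x + ε := by
  have hlimsup_meas : ∀ i, Measurable fun x => limsup (fun n => h i n x) atTop := fun i =>
    .limsup' (hmeas i) ⟨atTop_basis, Set.to_countable _⟩ fun n => Set.to_countable _
  obtain ⟨t, ht, hμt, hinner⟩ := exists_measurableSet_forall_eventually_forall_notMem_lt_add
    hmeas hlimsup_meas (fun i => (hbdd i).mono fun x hx ε hε =>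
      eventually_lt_of_limsup_lt (lt_add_of_pos_right _ hε) hx) (ENNReal.half_pos hδ.ne')
  obtain ⟨u, hu, hμu, houter⟩ := exists_measurableSet_eventually_forall_notMem_lt_add
    hlimsup_meas hg (hlim.mono fun x hx ε hε =>
      hx.eventually_lt_const (lt_add_of_pos_right _ hε)) (ENNReal.half_pos hδ.ne')
  refine ⟨(t ∪ u)ᶜ, (ht.union hu).compl, ?_, fun ε hε => ?_⟩
  · calc μ (t ∪ u)ᶜᶜ = μ (t ∪ u) := by rw [compl_compl]
      _ ≤ μ t + μ u := measure_union_le t u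
      _ < δ / 2 + δ / 2 := ENNReal.add_lt_add hμt hμu
      _ = δ := ENNReal.add_halves δ
  · filter_upwards [houter (ε / 2) (half_pos hε)] with i hi
    filter_upwards [hinner i (ε / 2) (half_pos hε)] with n hn x hx
    obtain ⟨hxt, hxu⟩ := not_or.1 hx
    linarith [hn x hxt, hi x hxu]

end Egorov

theorem tendsto_limsup_biSup_zero {X ι κ : Type*} {l : Filter ι} {l' : Filter κ} [NeBot l']
    {h : ι → κ → X → ℝ} {s : Set X} (hnonneg : ∀ i n, ∀ x ∈ s, 0 ≤ h i n x)
    (hsmall : ∀ ε > 0, ∀ᶠ i in l, ∀ᶠ n in l', ∀ x ∈ s, h i n x < ε) :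
    Tendsto (fun i => limsup (fun n => ⨆ x ∈ s, h i n x) l') l (𝓝 0) := by
  have hsup_nonneg : ∀ i n, 0 ≤ ⨆ x ∈ s, h i n x := fun i n =>
    Real.iSup_nonneg fun x => Real.iSup_nonneg (hnonneg i n x)
  refine Metric.nhds_basis_closedBall.tendsto_right_iff.2 fun ε hε => ?_
  filter_upwards [hsmall ε hε] with i hi
  have hsup_le : ∀ᶠ n in l', ⨆ x ∈ s, h i n x ≤ ε := by
    filter_upwards [hi] with n hn
    exact Real.iSup_le (fun x => Real.iSup_le (fun hx => (hn x hx).le) hε.le) hε.le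
  have hlower : 0 ≤ limsup (fun n => ⨆ x ∈ s, h i n x) l' :=
    le_limsup_of_frequently_le (.of_forall (hsup_nonneg i))
      (isBoundedUnder_of_eventually_le hsup_le)
  have hupper : limsup (fun n => ⨆ x ∈ s, h i n x) l' ≤ ε :=
    limsup_le_of_le (isBoundedUnder_of ⟨0, hsup_nonneg i⟩).isCoboundedUnder_le hsup_le
  rwa [Metric.mem_closedBall, Real.dist_eq, sub_zero, abs_of_nonneg hlower]

theorem stmt_17_general {X ι κ : Type*} [MeasurableSpace X] [SemilatticeSup ι] [Nonempty ι]
    [Countable ι] [SemilatticeSup κ] [Nonempty κ] [Countable κ] (μ : Measure X)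
    [IsFiniteMeasure μ] (h : ι → κ → X → ℝ) (hmeas : ∀ i n, Measurable (h i n))
    (hnonneg : ∀ i n x, 0 ≤ h i n x)
    (hbdd : ∀ i, ∀ᵐ x ∂μ, IsBoundedUnder (· ≤ ·) atTop fun n => h i n x)
    (hlim : ∀ᵐ x ∂μ, Tendsto (fun i => limsup (fun n => h i n x) atTop) atTop (𝓝 0))
    {δ : ENNReal} (hδ : 0 < δ) :
    ∃ s, MeasurableSet s ∧ μ sᶜ < δ ∧
      Tendsto (fun i => limsup (fun n => ⨆ x ∈ s, h i n x) atTop) atTop (𝓝 0) := by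
  obtain ⟨s, hs, hμs, hsmall⟩ :=
    exists_measurableSet_eventually_eventually_forall_lt_add hmeas measurable_const hbdd hlim hδ
  exact ⟨s, hs, hμs, tendsto_limsup_biSup_zero (fun i n x _ => hnonneg i n x)
    (by simpa only [zero_add] using hsmall)⟩

/-- Egorov-type statement for a double limit. If
`limsup_n h R n x → 0` as `R → ∞` pointwise, then for every `δ > 0` there is a set `X_δ` of
measure within `δ` of full and a subsequence `R j` along which the convergence is uniform
on `X_δ`. -/
theorem stmt_17 {X : Type*} [MeasurableSpace X] (μ : Measure X) [IsFiniteMeasure μ]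
    (h : ℕ → ℕ → X → ℝ)
    (hmeas : ∀ R n, Measurable (h R n))
    (hrange : ∀ R n x, h R n x ∈ Set.Icc (0 : ℝ) 1)
    (hlim : ∀ x, Tendsto (fun R => Filter.limsup (fun n => h R n x) atTop)
      atTop (nhds 0)) :
    ∀ δ : ℝ, 0 < δ →
      ∃ Xδ : Set X, MeasurableSet Xδ ∧ μ Xδᶜ < ENNReal.ofReal δ ∧
        ∃ Rj : ℕ → ℕ, StrictMono Rj ∧
          Tendsto (fun j => Filter.limsup
              (fun n => ⨆ x ∈ Xδ, h (Rj j) n x) atTop)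
            atTop (nhds 0) := by
  intro δ hδ
  obtain ⟨s, hs, hμs, hlimsup⟩ := stmt_17_general μ h hmeas (fun R n x => (hrange R n x).1)
    (fun R => .of_forall fun x => isBoundedUnder_of ⟨1, fun n => (hrange R n x).2⟩)
    (.of_forall hlim) (ENNReal.ofReal_pos.2 hδ)
  exact ⟨s, hs, hμs, id, strictMono_id, hlimsup⟩
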